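/- For every n ≥ 3, the dimension over ℚ of the linear span of {t_σ : σ ∈ Sₙ} inside Inv(sl₂^{⊗n}) equals Rₙ − (1 + (−1)ⁿ)/2, i.e. Rₙ for n odd and Rₙ − 1 for n even. (Equivalently, the kernel of the homotopy sl₂ weight system W^h_n on the (n−2)!-dimensional space of connected trees has dimension (n−2)! − Rₙ + (1+(−1)ⁿ)/2.) -/

import Mathlib

/- For every n ≥ 3, the dimension of the ℚ-span of {t_σ : σ ∈ Sₙ} inside
   Inv(sl₂^{⊗n}) equals Rₙ − (1+(−1)ⁿ)/2, i.e. Rₙ for n odd and Rₙ − 1 for n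
   even.  κ, the family t, and the Riordan numbers R are quantified via their
   defining properties. -/

open scoped TensorProduct

set_option synthInstance.maxHeartbeats 1000000
set_option maxHeartbeats 1000000

noncomputable section

abbrev sl2 : Type := ↥(LieAlgebra.SpecialLinear.sl (Fin 2) ℚ)

def H : sl2 :=
  ⟨!![1, 0; 0, -1], show _ ∈ LinearMap.ker (Matrix.traceLinearMap (Fin 2) ℚ ℚ) from
    LinearMap.mem_ker.2 (by simp [Matrix.trace_fin_two])⟩

def E : sl2 :=
  ⟨!![0, 1; 0, 0], show _ ∈ LinearMap.ker (Matrix.traceLinearMap (Fin 2) ℚ ℚ) from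
    LinearMap.mem_ker.2 (by simp [Matrix.trace_fin_two])⟩

def F : sl2 :=
  ⟨!![0, 0; 1, 0], show _ ∈ LinearMap.ker (Matrix.traceLinearMap (Fin 2) ℚ ℚ) from
    LinearMap.mem_ker.2 (by simp [Matrix.trace_fin_two])⟩

/-- The n-fold tensor power sl₂^{⊗n}. -/
abbrev TP (n : ℕ) : Type := ⨂[ℚ] (_ : Fin n), sl2

/-- The adjoint action of `x ∈ sl₂` on `sl₂^{⊗n}`, extended as a derivation. -/
def actOn (n : ℕ) (x : sl2) : TP n →ₗ[ℚ] TP n :=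
  ∑ i : Fin n,
    PiTensorProduct.map (fun j => if j = i then LieAlgebra.ad ℚ sl2 x else LinearMap.id)

/-- The space of invariant tensors of `sl₂^{⊗n}`. -/
def Invariants (n : ℕ) : Submodule ℚ (TP n) :=
  ⨅ x : sl2, LinearMap.ker (actOn n x)

/-- Pairing of `sl₂^{⊗n}` against `x₁ ⊗ ⋯ ⊗ xₙ` via `κ^{⊗n}`:
on pure tensors, `pairT κ n x (a₁ ⊗ ⋯ ⊗ aₙ) = ∏ i, κ(aᵢ, xᵢ)`. -/
def pairT (κ : sl2 →ₗ[ℚ] sl2 →ₗ[ℚ] ℚ) (n : ℕ) (x : Fin n → sl2) : TP n →ₗ[ℚ] ℚ :=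
  PiTensorProduct.lift
    ((MultilinearMap.mkPiAlgebra ℚ (Fin n) ℚ).compLinearMap fun i => κ.flip (x i))

/-- Left-iterated Lie bracket of a list: `[[⋯[a₁,a₂],⋯],a_k]`. -/
def lBrk : List sl2 → sl2
  | [] => 0
  | a :: l => l.foldl (fun y z => ⁅y, z⁆) a

/-- `κ([[⋯[x₁,x₂],⋯],x_{k-1}], x_k)`, read as `κ(x₁,x₂)` when `k = 2`. -/
def brkVal (κ : sl2 →ₗ[ℚ] sl2 →ₗ[ℚ] ℚ) {k : ℕ} (x : Fin k → sl2) : ℚ :=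
  κ (lBrk (List.ofFn x).dropLast) ((List.ofFn x).getLastD 0)

/-!
Pairing with pure tensors in `E, H, F` turns a tensor of degree `n` into a function on words of
length `n` in three letters. There the invariants form the kernel of `E` from weight `0` to weight
`-1`; by positivity of an inner product for which `E` and `F` are adjoint, this map is
surjective. So the dimension of the invariants is a difference of trinomial coefficients, and this
difference satisfies the Riordan recurrence.

The linear trees span the orthogonal complement of the *symmetric* invariants, which are multiples
of a power of the quadratic form: one line for `n` even, none for `n` odd. A symmetric function is
orthogonal to every tree with at least three leaves, since exchanging the first two leaves changes
the sign of the tree. Conversely, suppose that an invariant `g` of degree `n + 1` is orthogonal to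
all trees. Contracting two slots of `g` with the bracket gives an invariant of degree `n` orthogonal
to all trees, symmetric by induction. Comparing its values for the different choices of two slots
shows that this contraction vanishes, which means that `g` is unchanged by exchanging the two slots.
-/

namespace LinearTree

section Trinomial

/-- The weights of the letters `0, 1, 2`, which stand for the basis vectors `E, H, F` of `sl₂`;
these are the eigenvalues of `ad H`, halved. -/
def letterWeight : Fin 3 → ℤ := ![1, 0, -1]

/-- The weight of a word, i.e. of the corresponding pure tensor in `E, H, F`. -/
def weight {n : ℕ} (w : Fin n → Fin 3) : ℤ := ∑ i, letterWeight (w i)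

/-- The trinomial coefficient `[xᵏ] (x + 1 + x⁻¹)ⁿ`, as the number of words of weight `k`. -/
def trinomial (n : ℕ) (k : ℤ) : ℕ := Fintype.card {w : Fin n → Fin 3 // weight w = k}

lemma sum_words_succ {α M : Type*} [Fintype α] [AddCommMonoid M] {n : ℕ}
    (G : (Fin (n + 1) → α) → M) :
    ∑ w, G w = ∑ a, ∑ r : Fin n → α, G (Fin.cons a r) := by
  rw [← (Fin.consEquiv fun _ : Fin (n + 1) => α).sum_comp, Fintype.sum_prod_type]
  rfl

lemma weight_cons {n : ℕ} (a : Fin 3) (r : Fin n → Fin 3) :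
    weight (Fin.cons a r : Fin (n + 1) → Fin 3) = letterWeight a + weight r := by
  simp [weight, Fin.sum_univ_succ]

lemma trinomial_eq_sum (n : ℕ) (k : ℤ) :
    trinomial n k = ∑ w : Fin n → Fin 3, if weight w = k then 1 else 0 := by
  rw [trinomial, Fintype.card_subtype, Finset.card_filter]

lemma trinomial_zero (k : ℤ) : trinomial 0 k = if k = 0 then 1 else 0 := by
  simp [trinomial_eq_sum, weight, eq_comm]

lemma trinomial_succ (n : ℕ) (k : ℤ) :
    trinomial (n + 1) k = trinomial n (k - 1) + trinomial n k + trinomial n (k + 1) := by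
  have add_eq_iff (a x : ℤ) : a + x = k ↔ x = k - a := by omega
  simp only [trinomial_eq_sum, sum_words_succ, Fin.sum_univ_three, weight_cons, add_eq_iff]
  simp only [letterWeight, Matrix.cons_val, sub_zero, sub_neg_eq_add]
  congr!

lemma trinomial_neg (n : ℕ) (k : ℤ) : trinomial n (-k) = trinomial n k := by
  induction n generalizing k with
  | zero => simp [trinomial_zero]
  | succ n ih =>
    rw [trinomial_succ, trinomial_succ, ← ih (k - 1), ← ih (k + 1), ih k, neg_sub', neg_add',
      sub_neg_eq_add]
    ring

-- Compare coefficients in `(x + 1 + x⁻¹) · x (d/dx) Tⁿ = n (x - x⁻¹) Tⁿ`, `T = x + 1 + x⁻¹`.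
lemma trinomial_relation (n : ℕ) (k : ℤ) :
    (n - k + 1) * (trinomial n (k - 1) : ℤ) =
      k * trinomial n k + (n + k + 1) * trinomial n (k + 1) := by
  induction n generalizing k with
  | zero => simp only [trinomial_zero]; grind
  | succ n ih =>
    have left := ih (k - 1)
    have right := ih (k + 1)
    rw [sub_add_cancel] at left
    rw [add_sub_cancel_right] at right
    simp only [trinomial_succ, sub_add_cancel, add_sub_cancel_right]
    push_cast
    linear_combination left + ih k + right

lemma trinomial_diff_recurrence (n : ℕ) :
    (n + 3) * (trinomial (n + 2) 0 - trinomial (n + 2) 1 : ℤ) =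
      (n + 1) * (2 * (trinomial (n + 1) 0 - trinomial (n + 1) 1) +
        3 * (trinomial n 0 - trinomial n 1)) := by
  have relation_one := trinomial_relation n 1
  have relation_two := trinomial_relation n 2
  simp only [trinomial_succ]
  norm_num [trinomial_neg] at relation_one relation_two ⊢
  linear_combination relation_two - 2 * relation_one

lemma riordan_add_trinomial (R : ℕ → ℕ) (hR2 : R 2 = 1) (hR3 : R 3 = 1)
    (hRrec : ∀ n, 4 ≤ n → (n + 1) * R n = (n - 1) * (2 * R (n - 1) + 3 * R (n - 2)))
    (n : ℕ) : R (n + 2) + trinomial (n + 2) 1 = trinomial (n + 2) 0 := by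
  induction n using Nat.twoStepInduction with
  | zero => simp [hR2, trinomial_succ, trinomial_zero]
  | one => simp [hR3, trinomial_succ, trinomial_zero]
  | more n ih ih' =>
    have riordan := hRrec (n + 4) (by omega)
    have diff := trinomial_diff_recurrence (n + 2)
    rw [show n + 4 - 1 = n + 3 by omega, show n + 4 - 2 = n + 2 by omega] at riordan
    zify at riordan ih ih' ⊢
    push_cast at diff
    refine mul_left_cancel₀ (show (n + 5 : ℤ) ≠ 0 by positivity) ?_
    linear_combination riordan - diff + (n + 3) * (2 * ih' + 3 * ih)

end Trinomial

section WordFunctions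

variable {ι α R : Type*} [CommRing R]

/-- Relabelling the positions of words by `π`. -/
def relabel (π : Equiv.Perm ι) : Module.End R ((ι → α) → R) := LinearMap.funLeft R R (· ∘ π)

lemma relabel_apply (π : Equiv.Perm ι) (f : (ι → α) → R) (w : ι → α) :
    relabel π f w = f (w ∘ π) :=
  rfl

/-- The functions on words that are invariant under permuting the positions. -/
def IsSymmetric (f : (ι → α) → R) : Prop := ∀ π : Equiv.Perm ι, relabel π f = f

variable [DecidableEq ι] [Fintype α]

/-- The matrix `A` acting on the `i`-th letter of functions on words, i.e. on the `i`-th factor of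
the tensor power of `α → R`. -/
def slotMap (i : ι) (A : Matrix α α R) : Module.End R ((ι → α) → R) where
  toFun f w := ∑ c, A (w i) c * f (Function.update w i c)
  map_add' f g := by
    ext w
    simp [mul_add, Finset.sum_add_distrib]
  map_smul' c f := by
    ext w
    simp [Finset.mul_sum, mul_left_comm]

lemma slotMap_apply (i : ι) (A : Matrix α α R) (f : (ι → α) → R) (w : ι → α) :
    slotMap i A f w = ∑ c, A (w i) c * f (Function.update w i c) :=
  rfl

lemma slotMap_sub (i : ι) (A B : Matrix α α R) :
    slotMap i (A - B) = slotMap i A - slotMap i B := by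
  ext1 f
  ext w
  simp [slotMap_apply, sub_mul]

lemma slotMap_mul (i : ι) (A B : Matrix α α R) :
    slotMap i (A * B) = slotMap i A * slotMap i B := by
  ext1 f
  ext w
  simp only [Module.End.mul_apply, slotMap_apply, Matrix.mul_apply, Finset.sum_mul,
    Finset.mul_sum, Function.update_self, Function.update_idem, mul_assoc]
  exact Finset.sum_comm

lemma slotMap_commute {i j : ι} (hij : i ≠ j) (A B : Matrix α α R) :
    Commute (slotMap i A) (slotMap j B) := by
  ext1 f
  ext w
  simp only [Module.End.mul_apply, slotMap_apply, Finset.mul_sum,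
    Function.update_of_ne hij, Function.update_of_ne hij.symm]
  rw [Finset.sum_comm]
  refine Finset.sum_congr rfl fun d _ => Finset.sum_congr rfl fun c _ => ?_
  rw [Function.update_comm hij, mul_left_comm]

variable [Fintype ι]

/-- The matrix `A` acting on functions on words as a derivation: the sum of its actions on the
single letters. -/
def derivMap (A : Matrix α α R) : Module.End R ((ι → α) → R) := ∑ i, slotMap i A

lemma derivMap_apply (A : Matrix α α R) (f : (ι → α) → R) (w : ι → α) :
    derivMap A f w = ∑ i, ∑ c, A (w i) c * f (Function.update w i c) := by
  simp [derivMap, slotMap_apply]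

lemma derivMap_lie (A B : Matrix α α R) :
    derivMap (ι := ι) ⁅A, B⁆ = ⁅derivMap (ι := ι) A, derivMap B⁆ := by
  have slot_lie (i j : ι) :
      ⁅slotMap i A, slotMap j B⁆ = if i = j then slotMap i ⁅A, B⁆ else 0 := by
    split_ifs with hij
    · subst hij
      simp only [Ring.lie_def, slotMap_sub, slotMap_mul]
    · exact commute_iff_lie_eq.1 (slotMap_commute hij A B)
  simp only [derivMap, LieRing.of_associative_ring_bracket, Finset.sum_mul_sum]
  rw [Finset.sum_comm (γ := ι), ← Finset.sum_sub_distrib]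
  simp only [← Finset.sum_sub_distrib, ← LieRing.of_associative_ring_bracket]
  simp [slot_lie]

lemma derivMap_diagonal_apply [DecidableEq α] (d : α → R) (f : (ι → α) → R) (w : ι → α) :
    derivMap (Matrix.diagonal d) f w = (∑ i, d (w i)) * f w := by
  simp [derivMap_apply, Matrix.diagonal_apply, Finset.sum_mul]

lemma derivMap_cons {n : ℕ} (A : Matrix α α R) (f : (Fin (n + 1) → α) → R) (a : α)
    (r : Fin n → α) :
    derivMap A f (Fin.cons a r) =
      ∑ c, A a c * f (Fin.cons c r) + derivMap A (fun s => f (Fin.cons a s)) r := by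
  simp [derivMap_apply, Fin.sum_univ_succ, Fin.update_cons_zero, ← Fin.cons_update]

lemma derivMap_relabel (π : Equiv.Perm ι) (A : Matrix α α R) (f : (ι → α) → R) :
    derivMap A (relabel π f) = relabel π (derivMap A f) := by
  ext w
  simp only [relabel_apply, derivMap_apply, Function.update_comp_equiv]
  rw [← Equiv.sum_comp π]
  simp

section WordForm

variable [DecidableEq α] (μ : α → R)

/-- The tensor power of the diagonal form on `α → R` with weights `μ`. -/
def wordForm : LinearMap.BilinForm R ((ι → α) → R) :=
  Matrix.toBilin' (Matrix.diagonal fun w => ∏ i, μ (w i))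

lemma wordForm_apply (f g : (ι → α) → R) :
    wordForm μ f g = ∑ w, (∏ i, μ (w i)) * (f w * g w) := by
  simp only [wordForm, Matrix.toBilin'_apply, Matrix.diagonal_apply, mul_ite, ite_mul, mul_zero,
    zero_mul, Finset.sum_ite_eq, Finset.mem_univ, if_true]
  exact Finset.sum_congr rfl fun w _ => by ring

lemma wordForm_isSymm : (wordForm (ι := ι) μ).IsSymm :=
  ⟨fun f g => by simp only [wordForm_apply, mul_comm (f _)]⟩

lemma wordForm_relabel (π : Equiv.Perm ι) (f g : (ι → α) → R) :
    wordForm μ (relabel π f) (relabel π g) = wordForm μ f g := by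
  simp only [wordForm_apply, relabel_apply]
  rw [← Equiv.sum_comp (π.arrowCongr (Equiv.refl α))]
  refine Finset.sum_congr rfl fun w _ => ?_
  rw [← Equiv.prod_comp π]
  simp [Function.comp_def]

variable {μ}

lemma wordForm_slotMap_left {A B : Matrix α α R} (hAB : ∀ a b, μ a * A a b = μ b * B b a) (i : ι)
    (f g : (ι → α) → R) : wordForm μ (slotMap i A f) g = wordForm μ f (slotMap i B g) := by
  have prod_update (w : ι → α) (c : α) :
      ∏ j, μ (Function.update w i c j) = μ c * ∏ j ∈ Finset.univ.erase i, μ (w j) := by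
    rw [← Finset.mul_prod_erase _ _ (Finset.mem_univ i), Function.update_self]
    congr 1
    exact Finset.prod_congr rfl fun j hj => by
      rw [Function.update_of_ne (Finset.ne_of_mem_erase hj)]
  have swap_involutive : Function.Involutive
      fun p : (ι → α) × α => (Function.update p.1 i p.2, p.1 i) := fun p => by simp
  simp only [wordForm_apply, slotMap_apply, Finset.mul_sum, Finset.sum_mul]
  rw [← Fintype.sum_prod_type', ← Fintype.sum_prod_type',
    ← Equiv.sum_comp swap_involutive.toPerm]
  refine Finset.sum_congr rfl fun ⟨w, c⟩ _ => ?_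
  have prod_self := prod_update w (w i)
  rw [Function.update_eq_self] at prod_self
  simp only [Function.Involutive.coe_toPerm, prod_update, prod_self, Function.update_self,
    Function.update_idem, Function.update_eq_self]
  linear_combination (∏ j ∈ Finset.univ.erase i, μ (w j)) * f w * g (Function.update w i c) *
    hAB c (w i)

lemma wordForm_derivMap_left {A B : Matrix α α R} (hAB : ∀ a b, μ a * A a b = μ b * B b a)
    (f g : (ι → α) → R) : wordForm μ (derivMap A f) g = wordForm μ f (derivMap B g) := by
  simp [derivMap, LinearMap.sum_apply, map_sum, wordForm_slotMap_left hAB]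

end WordForm

lemma wordForm_self_pos {ι α : Type*} [Fintype ι] [DecidableEq ι] [Fintype α] [DecidableEq α]
    {K : Type*} [Field K] [LinearOrder K] [IsStrictOrderedRing K] {μ : α → K} (hμ : ∀ a, 0 < μ a)
    {f : (ι → α) → K} (hf : f ≠ 0) : 0 < wordForm μ f f := by
  obtain ⟨w, hw⟩ := Function.ne_iff.1 hf
  have weight_pos (v : ι → α) : 0 < ∏ i, μ (v i) := Finset.prod_pos fun i _ => hμ (v i)
  rw [wordForm_apply]
  exact Finset.sum_pos' (fun v _ => mul_nonneg (weight_pos v).le (mul_self_nonneg _))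
    ⟨w, Finset.mem_univ w, mul_pos (weight_pos w) (mul_self_pos.2 hw)⟩

end WordFunctions

lemma finrank_add_finrank_inf_orthogonal {K V : Type*} [Field K] [AddCommGroup V] [Module K V]
    [FiniteDimensional K V] {B : LinearMap.BilinForm K V} (hB : B.IsRefl)
    (hB_anisotropic : ∀ x, B x x = 0 → x = 0) {W G : Submodule K V} (hWG : W ≤ G) :
    Module.finrank K W + Module.finrank K ↥(G ⊓ B.orthogonal W) = Module.finrank K G := by
  have disjoint : Disjoint W (B.orthogonal W) := Submodule.disjoint_def.2 fun x hxW hxO =>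
    hB_anisotropic x (hxO x hxW)
  have compl : IsCompl W (B.orthogonal W) := (B.restrict_nondegenerate_iff_isCompl_orthogonal hB).1
    (B.nondegenerate_restrict_of_disjoint_orthogonal hB disjoint)
  have sup_eq : W ⊔ G ⊓ B.orthogonal W = G := by
    rw [inf_comm, ← sup_inf_assoc_of_le _ hWG, compl.sup_eq_top, top_inf_eq]
  have inf_eq : W ⊓ (G ⊓ B.orthogonal W) = ⊥ := (disjoint.mono_right inf_le_right).eq_bot
  rw [← Submodule.finrank_sup_add_finrank_inf_eq, sup_eq, inf_eq, finrank_bot, add_zero]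

section Invariants

/-- Functions on words of length `n` in the letters `0, 1, 2`. A multilinear form on `sl₂` is
encoded by its values on tuples of the basis vectors `E, H, F`. -/
abbrev WordFun (n : ℕ) : Type := (Fin n → Fin 3) → ℚ

/-- The structure constants of `sl₂`: the coefficient of the `c`-th vector of the basis `E, H, F`
in the bracket of the `x`-th and the `a`-th one is `adMatrix x a c`. -/
def adMatrix : Fin 3 → Matrix (Fin 3) (Fin 3) ℚ :=
  ![!![0, 0, 0; -2, 0, 0; 0, 1, 0], !![2, 0, 0; 0, 0, 0; 0, 0, -2], !![0, -1, 0; 0, 0, 2; 0, 0, 0]]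

/-- The norms of the letters in the inner product on words; they are chosen so that `ad E` and
`ad F` are adjoint to each other. -/
def letterNorm : Fin 3 → ℚ := ![1, 1 / 2, 1]

lemma letterNorm_pos (a : Fin 3) : 0 < letterNorm a := by
  fin_cases a <;> norm_num [letterNorm]

/-- The functions supported on the words of weight `k`. -/
def weightSpace (n : ℕ) (k : ℤ) : Submodule ℚ (WordFun n) :=
  ⨅ w ∈ {w | weight w ≠ k}, LinearMap.ker (LinearMap.proj w)

variable {n : ℕ}

lemma mem_weightSpace {k : ℤ} {f : WordFun n} :
    f ∈ weightSpace n k ↔ ∀ w, weight w ≠ k → f w = 0 := by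
  simp [weightSpace]

lemma finrank_weightSpace (n : ℕ) (k : ℤ) :
    Module.finrank ℚ (weightSpace n k) = trinomial n k := by
  have disjoint : Disjoint {w : Fin n → Fin 3 | weight w = k} {w | weight w ≠ k} :=
    Set.disjoint_left.2 fun _ h h' => h' h
  have cover : Set.univ ⊆ {w : Fin n → Fin 3 | weight w = k} ∪ {w | weight w ≠ k} :=
    fun w _ => em _
  rw [weightSpace, (LinearMap.iInfKerProjEquiv ℚ (fun _ => ℚ) disjoint cover).finrank_eq,
    Module.finrank_fintype_fun_eq_card]
  rfl

lemma weight_update (w : Fin n → Fin 3) (i : Fin n) (c : Fin 3) :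
    weight (Function.update w i c) = weight w - letterWeight (w i) + letterWeight c := by
  simp only [weight, ← Finset.add_sum_erase _ _ (Finset.mem_univ i), Function.update_self]
  rw [Finset.sum_congr rfl fun j hj => by rw [Function.update_of_ne (Finset.ne_of_mem_erase hj)]]
  ring

lemma derivMap_mem_weightSpace {A : Matrix (Fin 3) (Fin 3) ℚ} {d : ℤ}
    (hA : ∀ a c, A a c = 0 ∨ letterWeight c = letterWeight a + d) {k : ℤ} {f : WordFun n}
    (hf : f ∈ weightSpace n k) : derivMap A f ∈ weightSpace n (k - d) := by
  rw [mem_weightSpace] at hf ⊢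
  intro w hw
  rw [derivMap_apply]
  refine Finset.sum_eq_zero fun i _ => Finset.sum_eq_zero fun c _ => ?_
  rcases hA (w i) c with hc | hc
  · rw [hc, zero_mul]
  · rw [hf, mul_zero]
    rw [weight_update, hc]
    omega

lemma derivMap_E_mem_weightSpace {k : ℤ} {f : WordFun n} (hf : f ∈ weightSpace n k) :
    derivMap (adMatrix 0) f ∈ weightSpace n (k - 1) :=
  derivMap_mem_weightSpace
    (by intro a c; fin_cases a <;> fin_cases c <;> simp [adMatrix, letterWeight]) hf

lemma derivMap_F_mem_weightSpace {k : ℤ} {f : WordFun n} (hf : f ∈ weightSpace n k) :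
    derivMap (adMatrix 2) f ∈ weightSpace n (k + 1) := by
  simpa using derivMap_mem_weightSpace (A := adMatrix 2) (d := -1)
    (by intro a c; fin_cases a <;> fin_cases c <;> simp [adMatrix, letterWeight]) hf

lemma wordForm_derivMap_E_left (f g : WordFun n) :
    wordForm letterNorm (derivMap (adMatrix 0) f) g =
      wordForm letterNorm f (derivMap (adMatrix 2) g) :=
  wordForm_derivMap_left (by decide +kernel) f g

lemma derivMap_E_F_eq {k : ℤ} {f : WordFun n} (hf : f ∈ weightSpace n k) :
    derivMap (adMatrix 0) (derivMap (adMatrix 2) f) =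
      derivMap (adMatrix 2) (derivMap (adMatrix 0) f) - (2 * k : ℚ) • f := by
  have lie_eq : ⁅adMatrix 0, adMatrix 2⁆ = Matrix.diagonal fun a => -2 * (letterWeight a : ℚ) := by
    decide +kernel
  have lie_apply : derivMap ⁅adMatrix 0, adMatrix 2⁆ f =
      derivMap (adMatrix 0) (derivMap (adMatrix 2) f) -
        derivMap (adMatrix 2) (derivMap (adMatrix 0) f) := by
    rw [derivMap_lie]
    rfl
  rw [sub_eq_add_neg, ← sub_eq_iff_eq_add', ← lie_apply, lie_eq]
  ext w
  rw [derivMap_diagonal_apply, ← Finset.mul_sum, ← Int.cast_sum, ← weight]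
  by_cases hw : weight w = k
  · simp [hw]
  · simp [mem_weightSpace.1 hf w hw]

lemma wordForm_self_nonneg (f : WordFun n) : 0 ≤ wordForm letterNorm f f := by
  by_cases hf : f = 0
  · simp [hf]
  · exact (wordForm_self_pos letterNorm_pos hf).le

lemma eq_zero_of_wordForm_self {f : WordFun n} (hf : wordForm letterNorm f f = 0) : f = 0 :=
  by_contra fun hne => (wordForm_self_pos letterNorm_pos hne).ne' hf

lemma eq_zero_of_derivMap_E_F_eq_zero {f : WordFun n} (hf : f ∈ weightSpace n (-1))
    (hEF : derivMap (adMatrix 0) (derivMap (adMatrix 2) f) = 0) : f = 0 := by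
  have norm_sum : wordForm letterNorm (derivMap (adMatrix 0) f) (derivMap (adMatrix 0) f) +
      2 * wordForm letterNorm f f = 0 := by
    calc _ = wordForm letterNorm f (derivMap (adMatrix 0) (derivMap (adMatrix 2) f)) := by
          rw [derivMap_E_F_eq hf, wordForm_derivMap_E_left]
          simp
      _ = 0 := by rw [hEF, map_zero]
  apply eq_zero_of_wordForm_self
  linarith [wordForm_self_nonneg f, wordForm_self_nonneg (derivMap (adMatrix 0) f)]

/-- The functions on words that encode the `sl₂`-invariant multilinear forms. -/
def invariants (n : ℕ) : Submodule ℚ (WordFun n) := ⨅ x, LinearMap.ker (derivMap (adMatrix x))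

lemma mem_invariants {f : WordFun n} : f ∈ invariants n ↔ ∀ x, derivMap (adMatrix x) f = 0 := by
  simp [invariants]

lemma derivMap_H_eq_zero_iff {f : WordFun n} :
    derivMap (adMatrix 1) f = 0 ↔ f ∈ weightSpace n 0 := by
  have diagonal : adMatrix 1 = Matrix.diagonal fun a => 2 * (letterWeight a : ℚ) := by
    decide +kernel
  have apply_H (w : Fin n → Fin 3) : derivMap (adMatrix 1) f w = 2 * (weight w : ℚ) * f w := by
    rw [diagonal, derivMap_diagonal_apply, ← Finset.mul_sum, ← Int.cast_sum, ← weight]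
  simp [funext_iff, apply_H, mem_weightSpace, or_iff_not_imp_left]

lemma derivMap_F_eq_zero {f : WordFun n} (hf : f ∈ weightSpace n 0)
    (hE : derivMap (adMatrix 0) f = 0) : derivMap (adMatrix 2) f = 0 := by
  apply eq_zero_of_wordForm_self
  rw [← wordForm_derivMap_E_left, derivMap_E_F_eq hf, hE]
  simp

lemma mem_invariants_iff {f : WordFun n} :
    f ∈ invariants n ↔ f ∈ weightSpace n 0 ∧ derivMap (adMatrix 0) f = 0 := by
  rw [mem_invariants, Fin.forall_fin_succ, Fin.forall_fin_two, ← derivMap_H_eq_zero_iff]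
  exact ⟨fun ⟨hE, hH, _⟩ => ⟨hH, hE⟩, fun ⟨hH, hE⟩ =>
    ⟨hE, hH, derivMap_F_eq_zero (derivMap_H_eq_zero_iff.1 hH) hE⟩⟩

lemma relabel_mem_invariants {f : WordFun n} (hf : f ∈ invariants n) (π : Equiv.Perm (Fin n)) :
    relabel π f ∈ invariants n :=
  mem_invariants.2 fun x => by rw [derivMap_relabel, mem_invariants.1 hf x, map_zero]

-- `E` maps weight `0` onto weight `-1`, because `E ∘ F` is injective on weight `-1`.
lemma finrank_invariants (n : ℕ) :
    Module.finrank ℚ (invariants n) + trinomial n 1 = trinomial n 0 := by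
  let lower : weightSpace n 0 →ₗ[ℚ] weightSpace n (-1) :=
    (derivMap (adMatrix 0)).restrict fun _ => derivMap_E_mem_weightSpace
  let raise : weightSpace n (-1) →ₗ[ℚ] weightSpace n 0 :=
    (derivMap (adMatrix 2)).restrict fun _ => derivMap_F_mem_weightSpace
  have injective : Function.Injective (lower ∘ₗ raise) :=
    (injective_iff_map_eq_zero _).2 fun f hf =>
      Subtype.ext (eq_zero_of_derivMap_E_F_eq_zero f.2 (congrArg Subtype.val hf))
  have surjective : Function.Surjective lower :=
    Function.Surjective.of_comp (g := raise) (LinearMap.surjective_of_injective injective)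
  have ker_eq : LinearMap.ker lower = (invariants n).submoduleOf (weightSpace n 0) := by
    ext f
    simp [mem_invariants_iff, lower, Submodule.submoduleOf, Subtype.ext_iff]
  have invariants_le : invariants n ≤ weightSpace n 0 := fun _ hf => (mem_invariants_iff.1 hf).1
  have rank_nullity := lower.finrank_range_add_finrank_ker
  rw [LinearMap.range_eq_top.2 surjective, finrank_top, finrank_weightSpace, finrank_weightSpace,
    trinomial_neg, ker_eq, (Submodule.submoduleOfEquivOfLe invariants_le).finrank_eq]
    at rank_nullity
  omega

end Invariants

section Trees

variable {R L : Type*} [CommRing R] [LieRing L] [LieAlgebra R L]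
  (κ : LinearMap.BilinForm R L)

/-- The linear form `a ↦ κ([⋯[a, x₁], ⋯, x_{k-1}], x_k)` attached to the leaves `x₁, …, x_k` of a
linear tree. -/
def treeForm : List L → L →ₗ[R] R
  | [] => 0
  | [z] => κ.flip z
  | y :: z :: l => treeForm (z :: l) ∘ₗ (LieModule.toEnd R L L : L →ₗ[R] Module.End R L).flip y

/-- The value `κ([⋯[x₁, x₂], ⋯, x_{k-1}], x_k)` of a linear tree with leaves `x₁, …, x_k`; it is
`0` for `k ≤ 1`. -/
def treeVal : List L → R
  | [] => 0
  | a :: l => treeForm κ l a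

lemma treeForm_singleton (z a : L) : treeForm κ [z] a = κ a z :=
  rfl

lemma treeForm_cons {l : List L} (hl : l ≠ []) (y a : L) :
    treeForm κ (y :: l) a = treeForm κ l ⁅a, y⁆ := by
  obtain ⟨z, l, rfl⟩ := List.exists_cons_of_ne_nil hl
  rfl

lemma exists_treeForm_append_eq (l₁ l₂ : List L) :
    ∃ φ : L →ₗ[R] L →ₗ[R] R, ∀ y a, treeForm κ (l₁ ++ y :: l₂) a = φ y a := by
  let bracket : L →ₗ[R] Module.End R L := LieModule.toEnd R L L
  induction l₁ with
  | nil =>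
    by_cases hl₂ : l₂ = []
    · exact ⟨κ.flip, fun y a => by rw [hl₂]; rfl⟩
    · exact ⟨bracket.flip.compr₂ (treeForm κ l₂), fun y a => treeForm_cons κ hl₂ y a⟩
  | cons x l₁ ih =>
    obtain ⟨φ, hφ⟩ := ih
    refine ⟨φ.compl₂ (bracket.flip x), fun y a => ?_⟩
    rw [List.cons_append, treeForm_cons κ (by simp), hφ]
    rfl

lemma exists_treeVal_append_eq (l₁ l₂ : List L) :
    ∃ φ : L →ₗ[R] R, ∀ y, treeVal κ (l₁ ++ y :: l₂) = φ y := by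
  cases l₁ with
  | nil => exact ⟨treeForm κ l₂, fun y => rfl⟩
  | cons a l₁ =>
    obtain ⟨φ, hφ⟩ := exists_treeForm_append_eq κ l₁ l₂
    exact ⟨φ.flip a, fun y => hφ y a⟩

lemma treeVal_append_sum {α : Type*} [Fintype α] (l₁ l₂ : List L) (A : α → R) (y : α → L) :
    treeVal κ (l₁ ++ (∑ c, A c • y c) :: l₂) = ∑ c, A c * treeVal κ (l₁ ++ y c :: l₂) := by
  obtain ⟨φ, hφ⟩ := exists_treeVal_append_eq κ l₁ l₂
  simp [hφ]

lemma map_update_of_notMem {ι M : Type*} [DecidableEq ι] {l : List ι} {i : ι} (hi : i ∉ l)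
    (x : ι → M) (y : M) : l.map (Function.update x i y) = l.map x :=
  List.map_congr_left fun _ hj => Function.update_of_ne (ne_of_mem_of_not_mem hj hi) y x

lemma treeVal_map_update_sum {ι α : Type*} [DecidableEq ι] [Fintype α] {l : List ι} (hl : l.Nodup)
    {i : ι} (hi : i ∈ l) (x : ι → L) (A : α → R) (y : α → L) :
    treeVal κ (l.map (Function.update x i (∑ c, A c • y c))) =
      ∑ c, A c * treeVal κ (l.map (Function.update x i (y c))) := by
  obtain ⟨l₁, l₂, rfl⟩ := List.append_of_mem hi
  have hnodup := List.nodup_middle.1 hl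
  rw [List.nodup_cons, List.mem_append, not_or] at hnodup
  simp only [List.map_append, List.map_cons, Function.update_self,
    map_update_of_notMem hnodup.1.1,
    map_update_of_notMem hnodup.1.2, treeVal_append_sum]

lemma treeForm_append_lie {l₂ : List L} (hl₂ : l₂ ≠ []) (l₁ : List L) (y z a : L) :
    treeForm κ (l₁ ++ ⁅y, z⁆ :: l₂) a =
      treeForm κ (l₁ ++ y :: z :: l₂) a - treeForm κ (l₁ ++ z :: y :: l₂) a := by
  induction l₁ generalizing a with
  | nil =>
    have jacobi : ⁅a, ⁅y, z⁆⁆ = ⁅⁅a, y⁆, z⁆ - ⁅⁅a, z⁆, y⁆ := by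
      rw [leibniz_lie, ← lie_skew y, sub_eq_add_neg]
    simp only [List.nil_append, treeForm_cons κ hl₂, treeForm_cons κ (List.cons_ne_nil _ _), jacobi,
      map_sub]
  | cons x l₁ ih =>
    simp only [List.cons_append]
    simp [treeForm_cons, ih]

variable {κ}

section

variable {ι : Type*} [DecidableEq ι] {l : List ι}

lemma treeForm_lie_add_sum_update (hκ : κ.lieInvariant L) (hl : l.Nodup) (x : ι → L)
    (e a : L) :
    treeForm κ (l.map x) ⁅e, a⁆ +
      ∑ i ∈ l.toFinset, treeForm κ (l.map (Function.update x i ⁅e, x i⁆)) a = 0 := by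
  induction l generalizing a with
  | nil => simp [treeForm]
  | cons j l ih =>
    obtain ⟨hj, hl⟩ := List.nodup_cons.1 hl
    have ne_head : ∀ i ∈ l.toFinset, j ≠ i := by
      rintro i hi rfl
      exact hj (List.mem_toFinset.1 hi)
    rw [List.toFinset_cons, Finset.sum_insert (by simpa using hj), List.map_cons, List.map_cons,
      Function.update_self, map_update_of_notMem hj, Finset.sum_congr rfl fun i hi => by
        rw [List.map_cons, Function.update_of_ne (ne_head i hi)]]
    by_cases hnil : l = []
    · simp [hnil, treeForm_singleton, hκ e a (x j)]
    · have step := ih hl ⁅a, x j⁆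
      simp only [treeForm_cons κ (show l.map _ ≠ [] by simpa using hnil)]
      rw [leibniz_lie, map_add] at step
      linear_combination step

lemma sum_treeVal_map_update_eq_zero [Fintype ι] (hκ : κ.lieInvariant L)
    (hl : l.Nodup) (hmem : ∀ i, i ∈ l) (x : ι → L) (e : L) :
    ∑ i, treeVal κ (l.map (Function.update x i ⁅e, x i⁆)) = 0 := by
  cases l with
  | nil => simp [treeVal]
  | cons j l =>
    obtain ⟨hj, hnodup⟩ := List.nodup_cons.1 hl
    have ne_head : ∀ i ∈ l.toFinset, j ≠ i := by
      rintro i hi rfl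
      exact hj (List.mem_toFinset.1 hi)
    rw [← Finset.eq_univ_iff_forall.2 fun i => List.mem_toFinset.2 (hmem i), List.toFinset_cons,
      Finset.sum_insert (by simpa using hj), ← treeForm_lie_add_sum_update hκ hnodup x e (x j),
      List.map_cons, Function.update_self, map_update_of_notMem hj]
    congr 1
    refine Finset.sum_congr rfl fun i hi => ?_
    rw [List.map_cons, Function.update_of_ne (ne_head i hi), treeVal]

end

lemma treeForm_append_lie_last (hκ : κ.lieInvariant L) (l : List L)
    (y z a : L) :
    treeForm κ (l ++ [⁅y, z⁆]) a = treeForm κ (l ++ [y, z]) a := by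
  induction l generalizing a with
  | nil =>
    rw [List.nil_append, List.nil_append, treeForm_cons κ (List.cons_ne_nil z []),
      treeForm_singleton, treeForm_singleton, ← lie_skew a y, map_neg, LinearMap.neg_apply, hκ,
      neg_neg]
  | cons x l ih =>
    simp only [List.cons_append]
    simp [treeForm_cons, ih]

lemma treeVal_append_lie (hκ : κ.lieInvariant L)
    (hsymm : ∀ x y, κ x y = κ y x) (l₁ l₂ : List L) (y z : L) :
    treeVal κ (l₁ ++ ⁅y, z⁆ :: l₂) = treeVal κ (l₁ ++ y :: z :: l₂) -
      if l₁ = [] ↔ l₂ = [] then treeVal κ (l₁ ++ z :: y :: l₂) else 0 := by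
  by_cases hl₂ : l₂ = []
  · subst hl₂
    cases l₁ with
    | nil => simp [treeVal, treeForm, hsymm y z]
    | cons a l₁ => simp [treeVal, treeForm_append_lie_last hκ]
  · cases l₁ with
    | nil => simp [treeVal, hl₂, treeForm_cons κ hl₂]
    | cons a l₁ => simp [treeVal, hl₂, treeForm_append_lie κ hl₂]

section TreeFun

variable {ι α : Type*} (κ) (b : α → L)

/-- The function on words given by a linear tree: its leaves are labelled by the positions in `l`,
and a letter `a` stands for the vector `b a`. -/
def treeFun (l : List ι) (w : ι → α) : R := treeVal κ (l.map (b ∘ w))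

lemma relabel_treeFun (π : Equiv.Perm ι) (l : List ι) :
    relabel π (treeFun κ b l) = treeFun κ b (l.map π) := by
  ext w
  simp [relabel_apply, treeFun, Function.comp_assoc]

variable {κ b} [Fintype ι] [DecidableEq ι] [Fintype α]

lemma derivMap_treeFun (hκ : κ.lieInvariant L) {e : L} {A : Matrix α α R}
    (hA : ∀ a, ⁅e, b a⁆ = ∑ c, A a c • b c) {l : List ι} (hl : l.Nodup) (hmem : ∀ i, i ∈ l) :
    derivMap A (treeFun κ b l) = 0 := by
  ext w
  rw [Pi.zero_apply, ← sum_treeVal_map_update_eq_zero hκ hl hmem (b ∘ w) e, derivMap_apply]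
  refine Finset.sum_congr rfl fun i _ => ?_
  rw [Function.comp_apply, hA, treeVal_map_update_sum κ hl (hmem i)]
  simp only [treeFun, Function.comp_update]

end TreeFun

end Trees

section Contraction

/-- Replacing a leaf of a multilinear form by the bracket of two leaves: the letter at position `0`
is expanded into the bracket of the letters at positions `0` and `1`. The array `A` holds the
structure constants. -/
def insertBracket {α R : Type*} [Fintype α] [CommRing R] (A : α → Matrix α α R) {n : ℕ}
    (f : (Fin (n + 1) → α) → R) (w : Fin (n + 2) → α) : R :=
  ∑ c, A (w 0) (w 1) c * f (Fin.cons c (Fin.tail (Fin.tail w)))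

section

variable {α R L : Type*} [Fintype α] [CommRing R] [LieRing L] [LieAlgebra R L] {b : α → L}
  {κ : LinearMap.BilinForm R L} {A : α → Matrix α α R} {n : ℕ}

lemma insertBracket_treeFun (hκ : κ.lieInvariant L) (hsymm : ∀ x y, κ x y = κ y x)
    (hA : ∀ a a', ⁅b a, b a'⁆ = ∑ c, A a a' c • b c) {l₁ l₂ : List (Fin (n + 1))}
    (hl₁ : 0 ∉ l₁) (hl₂ : 0 ∉ l₂) :
    insertBracket A (treeFun κ b (l₁ ++ 0 :: l₂)) =
      treeFun κ b (l₁.map Fin.succ ++ 0 :: 1 :: l₂.map Fin.succ) -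
        if l₁ = [] ↔ l₂ = [] then treeFun κ b (l₁.map Fin.succ ++ 1 :: 0 :: l₂.map Fin.succ)
        else 0 := by
  ext w
  have map_cons {l : List (Fin (n + 1))} (hl : 0 ∉ l) (c : α) :
      l.map (b ∘ Fin.cons c (Fin.tail (Fin.tail w))) = (l.map Fin.succ).map (b ∘ w) := by
    rw [List.map_map]
    refine List.map_congr_left fun i hi => ?_
    obtain ⟨j, rfl⟩ := Fin.exists_succ_eq.2 (ne_of_mem_of_not_mem hi hl)
    simp [Fin.tail]
  have bracket := treeVal_append_lie hκ hsymm ((l₁.map Fin.succ).map (b ∘ w))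
    ((l₂.map Fin.succ).map (b ∘ w)) (b (w 0)) (b (w 1))
  rw [hA, treeVal_append_sum] at bracket
  simp only [insertBracket, treeFun, List.map_append, List.map_cons, map_cons hl₁, map_cons hl₂,
    Function.comp_apply, Fin.cons_zero, bracket, List.map_eq_nil_iff, Pi.sub_apply]
  split_ifs <;> simp [treeFun]

end

variable {n : ℕ}

/-- The adjoint of `insertBracket adMatrix` with respect to `wordForm letterNorm`. -/
def contract (g : WordFun (n + 2)) (w : Fin (n + 1) → Fin 3) : ℚ :=
  let antisymm (a b : Fin 3) : ℚ :=
    g (Fin.cons a (Fin.cons b (Fin.tail w))) - g (Fin.cons b (Fin.cons a (Fin.tail w)))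
  ![antisymm 1 0, 2 * antisymm 0 2, antisymm 2 1] (w 0)

lemma wordForm_insertBracket (g : WordFun (n + 2)) (f : WordFun (n + 1)) :
    wordForm letterNorm g (insertBracket adMatrix f) = wordForm letterNorm (contract g) f := by
  have one_eq (a b : Fin 3) (r : Fin n → Fin 3) :
      (Fin.cons a (Fin.cons b r : Fin (n + 1) → Fin 3) : Fin (n + 2) → Fin 3) 1 = b := rfl
  simp only [wordForm_apply, sum_words_succ, Fin.prod_univ_succ, insertBracket, contract,
    Fin.cons_zero, Fin.cons_succ, one_eq, Fin.tail_cons, Fin.sum_univ_three,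
    ← Finset.sum_add_distrib]
  refine Finset.sum_congr rfl fun r _ => ?_
  simp [letterNorm, adMatrix]
  ring

lemma sub_swap_eq_sum_contract (g : WordFun (n + 2)) (a b : Fin 3) (r : Fin n → Fin 3) :
    g (Fin.cons a (Fin.cons b r)) - g (Fin.cons b (Fin.cons a r)) =
      1 / 2 * ∑ c, adMatrix a b c * contract g (Fin.cons c r) := by
  fin_cases a <;> fin_cases b <;> simp [adMatrix, contract, Fin.sum_univ_three]

lemma derivMap_contract (x : Fin 3) (g : WordFun (n + 2)) :
    derivMap (adMatrix x) (contract g) = contract (derivMap (adMatrix x) g) := by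
  ext w
  induction w using Fin.consCases with
  | _ c r =>
  let fiber (a b : Fin 3) : WordFun n := fun s => g (Fin.cons a (Fin.cons b s))
  have contract_fiber (c : Fin 3) : (fun s => contract g (Fin.cons c s)) =
      ![fiber 1 0 - fiber 0 1, (2 : ℚ) • (fiber 0 2 - fiber 2 0), fiber 2 1 - fiber 1 2] c := by
    fin_cases c <;> rfl
  have derivMap_fiber (a b : Fin 3) : derivMap (adMatrix x) g (Fin.cons a (Fin.cons b r)) =
      ∑ c, adMatrix x a c * fiber c b r +
        (∑ c, adMatrix x b c * fiber a c r + derivMap (adMatrix x) (fiber a b) r) := by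
    rw [derivMap_cons, derivMap_cons]
  rw [derivMap_cons, contract_fiber]
  simp only [contract, Fin.tail_cons, Fin.cons_zero, derivMap_fiber]
  fin_cases x <;> fin_cases c <;> simp [adMatrix, Fin.sum_univ_three] <;> ring

lemma contract_zero : contract (0 : WordFun (n + 2)) = 0 := by
  ext w
  generalize hc : w 0 = c
  fin_cases c <;> simp_all [contract]

lemma contract_mem_invariants {g : WordFun (n + 2)} (hg : g ∈ invariants (n + 2)) :
    contract g ∈ invariants (n + 1) :=
  mem_invariants.2 fun x => by rw [derivMap_contract, mem_invariants.1 hg, contract_zero]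

end Contraction

section TreeSpan

/-- The basis `E, H, F` of `sl₂`. -/
def sl2Basis : Module.Basis (Fin 3) ℚ sl2 :=
  .ofEquivFun
    { toFun := fun x => ![x.1 0 1, x.1 0 0, x.1 1 0]
      invFun := fun v => v 0 • E + v 1 • H + v 2 • F
      map_add' := fun x y => by ext i; fin_cases i <;> rfl
      map_smul' := fun c x => by ext i; fin_cases i <;> rfl
      left_inv := fun x => by
        have trace_zero : x.1 0 0 + x.1 1 1 = 0 := by
          simpa [Matrix.trace_fin_two] using LinearMap.mem_ker.1 x.2
        ext i j
        fin_cases i <;> fin_cases j <;> simp [E, H, F]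
        linarith
      right_inv := fun v => by ext i; fin_cases i <;> simp [E, H, F] }

lemma coe_sl2Basis : ⇑sl2Basis = ![E, H, F] := by
  ext a
  rw [sl2Basis, Module.Basis.coe_ofEquivFun]
  fin_cases a <;> simp

lemma lie_sl2Basis (x a : Fin 3) :
    ⁅sl2Basis x, sl2Basis a⁆ = ∑ c, adMatrix x a c • sl2Basis c := by
  ext i j
  fin_cases x <;> fin_cases a <;> fin_cases i <;> fin_cases j <;>
    simp [coe_sl2Basis, adMatrix, Fin.sum_univ_three, LieSubalgebra.coe_bracket,
      LieRing.of_associative_ring_bracket, E, H, F] <;> norm_num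

/-- The form `(x, y) ↦ tr(xy)` on `sl₂`. -/
def sl2Form : LinearMap.BilinForm ℚ sl2 :=
  let incl : sl2 →ₗ[ℚ] Matrix (Fin 2) (Fin 2) ℚ :=
    (LieAlgebra.SpecialLinear.sl (Fin 2) ℚ).subtype
  ((LinearMap.mul ℚ _).compr₂ (Matrix.traceLinearMap (Fin 2) ℚ ℚ)).compl₁₂ incl incl

lemma sl2Form_apply (x y : sl2) : sl2Form x y = (x.1 * y.1).trace :=
  rfl

lemma sl2Form_comm (x y : sl2) : sl2Form x y = sl2Form y x :=
  Matrix.trace_mul_comm x.1 y.1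

lemma sl2Form_lieInvariant : sl2Form.lieInvariant sl2 := fun x y z => by
  simp only [sl2Form_apply, LieSubalgebra.coe_bracket, LieRing.of_associative_ring_bracket,
    sub_mul, mul_sub, Matrix.trace_sub, neg_sub, ← mul_assoc]
  rw [Matrix.trace_mul_cycle x.1 y.1, Matrix.trace_mul_cycle z.1 x.1]

lemma toMatrix_sl2Form :
    LinearMap.BilinForm.toMatrix sl2Basis sl2Form = !![0, 0, 1; 0, 2, 0; 1, 0, 0] := by
  ext a b
  rw [LinearMap.BilinForm.toMatrix_apply, coe_sl2Basis, sl2Form_apply]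
  fin_cases a <;> fin_cases b <;> norm_num [E, H, F, Matrix.trace_fin_two]

lemma sl2Form_nondegenerate : sl2Form.Nondegenerate := by
  refine (LinearMap.BilinForm.nondegenerate_iff_det_ne_zero sl2Basis).2 ?_
  rw [toMatrix_sl2Form]
  decide +kernel

lemma eq_sl2Form {κ : sl2 →ₗ[ℚ] sl2 →ₗ[ℚ] ℚ}
    (hHH : κ H H = 2) (hEF : κ E F = 1) (hFE : κ F E = 1)
    (hHE : κ H E = 0) (hEH : κ E H = 0) (hHF : κ H F = 0) (hFH : κ F H = 0)
    (hEE : κ E E = 0) (hFF : κ F F = 0) : κ = sl2Form := by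
  refine (LinearMap.BilinForm.toMatrix sl2Basis).injective ?_
  rw [toMatrix_sl2Form]
  ext a b
  rw [LinearMap.BilinForm.toMatrix_apply, coe_sl2Basis]
  fin_cases a <;> fin_cases b <;> simp [*]

variable {n : ℕ}

/-- The function on words given by the linear tree with leaves labelled by `l`. -/
def sl2Tree (l : List (Fin n)) : WordFun n := treeFun sl2Form sl2Basis l

variable (n) in
/-- The span of the linear trees with `n` leaves. -/
def treeSpan : Submodule ℚ (WordFun n) :=
  Submodule.span ℚ (sl2Tree '' {l | l.Perm (List.finRange n)})

lemma sl2Tree_mem_invariants {l : List (Fin n)} (hl : l.Perm (List.finRange n)) :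
    sl2Tree l ∈ invariants n :=
  mem_invariants.2 fun x => derivMap_treeFun sl2Form_lieInvariant (lie_sl2Basis x)
    (hl.nodup_iff.2 (List.nodup_finRange n)) fun i => hl.mem_iff.2 (List.mem_finRange i)

lemma treeSpan_le_invariants : treeSpan n ≤ invariants n :=
  Submodule.span_le.2 <| Set.image_subset_iff.2 fun _ => sl2Tree_mem_invariants

/-- The orthogonal complement of the linear trees among the invariants. -/
def treeComplement (n : ℕ) : Submodule ℚ (WordFun n) :=
  invariants n ⊓ (wordForm letterNorm).orthogonal (treeSpan n)

lemma mem_treeComplement {g : WordFun n} :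
    g ∈ treeComplement n ↔ g ∈ invariants n ∧
      ∀ l : List (Fin n), l.Perm (List.finRange n) → wordForm letterNorm g (sl2Tree l) = 0 := by
  refine and_congr_right fun _ => ⟨fun hg l hl => ?_, fun hg f hf => ?_⟩
  · rw [(wordForm_isSymm letterNorm).eq]
    exact hg _ (Submodule.subset_span ⟨l, hl, rfl⟩)
  · have le_ker : treeSpan n ≤ LinearMap.ker (wordForm letterNorm g) :=
      Submodule.span_le.2 (Set.image_subset_iff.2 hg)
    exact (wordForm_isSymm letterNorm).isRefl.eq_iff.1 (le_ker hf)

lemma relabel_mem_treeComplement {g : WordFun n} (hg : g ∈ treeComplement n)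
    (π : Equiv.Perm (Fin n)) : relabel π g ∈ treeComplement n := by
  rw [mem_treeComplement] at hg ⊢
  refine ⟨relabel_mem_invariants hg.1 π, fun l hl => ?_⟩
  have tree_eq : sl2Tree l = relabel π (sl2Tree (l.map π.symm)) := by
    rw [sl2Tree, sl2Tree, relabel_treeFun]
    simp
  rw [tree_eq, wordForm_relabel]
  exact hg.2 _ ((hl.map π.symm).trans (Equiv.Perm.map_finRange_perm π.symm))

lemma contract_mem_treeComplement {g : WordFun (n + 2)} (hg : g ∈ treeComplement (n + 2)) :
    contract g ∈ treeComplement (n + 1) := by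
  rw [mem_treeComplement] at hg ⊢
  refine ⟨contract_mem_invariants hg.1, fun l hl => ?_⟩
  obtain ⟨l₁, l₂, rfl⟩ := List.append_of_mem (hl.mem_iff.2 (List.mem_finRange 0))
  have hnodup := List.nodup_middle.1 (hl.nodup_iff.2 (List.nodup_finRange _))
  rw [List.nodup_cons, List.mem_append, not_or] at hnodup
  have perm_succ :
      (0 :: (l₁.map Fin.succ ++ 1 :: l₂.map Fin.succ)).Perm (List.finRange (n + 2)) := by
    rw [List.finRange_succ]
    simpa using hl.map Fin.succ
  have perm_zero_one := List.perm_middle.trans perm_succ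
  have perm_one_zero := ((List.Perm.swap 0 1 _).append_left (l₁.map Fin.succ)).trans perm_zero_one
  rw [← wordForm_insertBracket, sl2Tree, insertBracket_treeFun sl2Form_lieInvariant sl2Form_comm
    lie_sl2Basis hnodup.1.1 hnodup.1.2, map_sub]
  have zero_one_eq := hg.2 _ perm_zero_one
  have one_zero_eq := hg.2 _ perm_one_zero
  rw [sl2Tree] at zero_one_eq one_zero_eq
  split_ifs <;> simp [zero_one_eq, one_zero_eq]

end TreeSpan

section SymmetricInvariants

variable {n : ℕ}

/-- The number of occurrences of the letter `c` in the word `w`. -/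
def letterCount (c : Fin 3) (w : Fin n → Fin 3) : ℕ := Finset.card {i | w i = c}

lemma letterCount_eq_sum (c : Fin 3) (w : Fin n → Fin 3) :
    letterCount c w = ∑ i, if w i = c then 1 else 0 :=
  Finset.card_filter _ _

lemma letterCount_cons (c a : Fin 3) (r : Fin n → Fin 3) :
    letterCount c (Fin.cons a r) = (if a = c then 1 else 0) + letterCount c r := by
  simp only [letterCount_eq_sum, Fin.sum_univ_succ, Fin.cons_zero, Fin.cons_succ]

lemma weight_eq_letterCount_sub (w : Fin n → Fin 3) :
    weight w = letterCount 0 w - letterCount 2 w := by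
  simp only [weight, letterCount_eq_sum, Nat.cast_sum, ← Finset.sum_sub_distrib]
  refine Finset.sum_congr rfl fun i _ => ?_
  generalize w i = a
  fin_cases a <;> rfl

lemma letterCount_add (w : Fin n → Fin 3) :
    letterCount 0 w + letterCount 1 w + letterCount 2 w = n := by
  simp only [letterCount_eq_sum, ← Finset.sum_add_distrib]
  trans ∑ _ : Fin n, 1
  · refine Finset.sum_congr rfl fun i _ => ?_
    generalize w i = a
    fin_cases a <;> rfl
  · simp

lemma exists_letterCount_eq {a c : ℕ} (h : a + c ≤ n) :
    ∃ w : Fin n → Fin 3, letterCount 0 w = a ∧ letterCount 2 w = c := by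
  induction n generalizing a c with
  | zero => exact ⟨Fin.elim0, by simp [letterCount_eq_sum]; omega⟩
  | succ n ih =>
    rcases a with _ | a
    · rcases c with _ | c
      · obtain ⟨w, hw⟩ := ih (a := 0) (c := 0) (Nat.zero_le n)
        exact ⟨Fin.cons 1 w, by simp [letterCount_cons, hw]⟩
      · obtain ⟨w, hw⟩ := ih (a := 0) (c := c) (by omega)
        exact ⟨Fin.cons 2 w, by simp [letterCount_cons, hw, add_comm]⟩
    · obtain ⟨w, hw⟩ := ih (a := a) (c := c) (by omega)
      exact ⟨Fin.cons 0 w, by simp [letterCount_cons, hw, add_comm]⟩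

lemma exists_perm_of_letterCount_eq {v w : Fin n → Fin 3}
    (h : ∀ c, letterCount c v = letterCount c w) : ∃ π : Equiv.Perm (Fin n), v = w ∘ π := by
  let fiberEquiv (c : Fin 3) : {i // v i = c} ≃ {i // w i = c} :=
    Fintype.equivOfCardEq (by simpa [letterCount, Fintype.card_subtype] using h c)
  exact ⟨Equiv.ofFiberEquiv fiberEquiv, funext fun i => (Equiv.ofFiberEquiv_map fiberEquiv i).symm⟩

lemma letterCount_update (c : Fin 3) (w : Fin n → Fin 3) (i : Fin n) (a : Fin 3) :
    letterCount c (Function.update w i a) + (if w i = c then 1 else 0) =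
      letterCount c w + if a = c then 1 else 0 := by
  simp only [letterCount_eq_sum, ← Finset.add_sum_erase _ _ (Finset.mem_univ i),
    Function.update_self]
  rw [Finset.sum_congr rfl fun j hj => by rw [Function.update_of_ne (Finset.ne_of_mem_erase hj)]]
  ring

/-- The symmetric function of weight `0` whose value on a word is determined by the number of
letters `0`. -/
def ofProfile (n : ℕ) (φ : ℕ → ℚ) : WordFun n := fun w =>
  if weight w = 0 then φ (letterCount 0 w) else 0

lemma ofProfile_mem_weightSpace (φ : ℕ → ℚ) : ofProfile n φ ∈ weightSpace n 0 :=
  mem_weightSpace.2 fun _ hw => if_neg hw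

lemma exists_ofProfile_eq {f : WordFun n} (hf : f ∈ weightSpace n 0) (hsymm : IsSymmetric f) :
    ∃ φ, ofProfile n φ = f := by
  have eq_of_count_eq : ∀ v w : Fin n → Fin 3, weight v = 0 → weight w = 0 →
      letterCount 0 v = letterCount 0 w → f v = f w := fun v w hv hw hvw => by
    rw [weight_eq_letterCount_sub] at hv hw
    have hv_total := letterCount_add v
    have hw_total := letterCount_add w
    obtain ⟨π, rfl⟩ := exists_perm_of_letterCount_eq (v := v) (w := w) fun c => by
      fin_cases c <;> simp <;> omega
    exact congrFun (hsymm π) w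
  refine ⟨fun a => if h : ∃ v, weight v = 0 ∧ letterCount 0 v = a then f h.choose else 0, ?_⟩
  ext w
  by_cases hw : weight w = 0
  · have hex : ∃ v, weight v = 0 ∧ letterCount 0 v = letterCount 0 w := ⟨w, hw, rfl⟩
    simp only [ofProfile, if_pos hw, dif_pos hex]
    exact eq_of_count_eq _ _ hex.choose_spec.1 hw hex.choose_spec.2
  · rw [mem_weightSpace.1 hf w hw, ofProfile, if_neg hw]

lemma isSymmetric_ofProfile (φ : ℕ → ℚ) : IsSymmetric (ofProfile n φ) := fun π => by
  ext w
  have count_comp (c : Fin 3) : letterCount c (w ∘ π) = letterCount c w := by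
    simp only [letterCount_eq_sum, Function.comp_apply]
    exact Equiv.sum_comp π fun i => if w i = c then 1 else 0
  simp [relabel_apply, ofProfile, weight_eq_letterCount_sub, count_comp]

lemma derivMap_ofProfile_apply (φ : ℕ → ℚ) {w : Fin n → Fin 3} (hw : weight w = -1) :
    derivMap (adMatrix 0) (ofProfile n φ) w =
      letterCount 2 w * φ (letterCount 0 w) - 2 * letterCount 1 w * φ (letterCount 0 w + 1) := by
  have letter_term (i : Fin n) :
      ∑ c, adMatrix 0 (w i) c * ofProfile n φ (Function.update w i c) =
        (if w i = 2 then 1 else 0) * φ (letterCount 0 w) -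
          2 * (if w i = 1 then 1 else 0) * φ (letterCount 0 w + 1) := by
    have count_H := letterCount_update 0 w i 1
    have count_E := letterCount_update 0 w i 0
    have weight_H := weight_update w i 1
    have weight_E := weight_update w i 0
    rw [hw] at weight_H weight_E
    generalize w i = a at *
    fin_cases a <;> simp [adMatrix, Fin.sum_univ_three, ofProfile, letterWeight] at * <;>
      simp [*]
  simp only [derivMap_apply, letter_term, Finset.sum_sub_distrib, ← Finset.sum_mul,
    ← Finset.mul_sum, letterCount_eq_sum, Nat.cast_sum, Nat.cast_ite, Nat.cast_one, Nat.cast_zero]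

lemma ofProfile_mem_invariants_iff (φ : ℕ → ℚ) :
    ofProfile n φ ∈ invariants n ↔
      ∀ a b, 2 * a + 1 + b = n → (a + 1) * φ a = 2 * b * φ (a + 1) := by
  have derivMap_mem := derivMap_E_mem_weightSpace (ofProfile_mem_weightSpace (n := n) φ)
  rw [mem_invariants_iff, and_iff_right (ofProfile_mem_weightSpace φ)]
  constructor
  · intro hφ a b hab
    obtain ⟨w, hw0, hw2⟩ := exists_letterCount_eq (n := n) (a := a) (c := a + 1) (by omega)
    have hw : weight w = -1 := by
      rw [weight_eq_letterCount_sub]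
      omega
    have hw1 : letterCount 1 w = b := by
      have := letterCount_add w
      omega
    have hderiv := derivMap_ofProfile_apply φ hw
    rw [hφ, hw0, hw1, hw2, Pi.zero_apply] at hderiv
    push_cast at hderiv
    linear_combination -hderiv
  · intro hφ
    ext w
    by_cases hw : weight w = -1
    · have hweight := hw
      rw [weight_eq_letterCount_sub] at hweight
      have hcount : letterCount 2 w = letterCount 0 w + 1 := by omega
      have total := letterCount_add w
      rw [derivMap_ofProfile_apply φ hw, hcount, Nat.cast_succ,
        hφ (letterCount 0 w) (letterCount 1 w) (by omega), sub_self, Pi.zero_apply]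
    · exact mem_weightSpace.1 derivMap_mem w hw

lemma ofProfile_eq_zero {φ : ℕ → ℚ} (hφ : ofProfile n φ ∈ invariants n) (hφ0 : φ 0 = 0) :
    ofProfile n φ = 0 := by
  rw [ofProfile_mem_invariants_iff] at hφ
  have profile_eq_zero : ∀ a, 2 * a ≤ n → φ a = 0 := fun a => by
    induction a with
    | zero => exact fun _ => hφ0
    | succ a ih =>
      intro ha
      obtain ⟨b, hb⟩ := Nat.exists_eq_add_of_le ha
      have step := hφ a (b + 1) (by omega)
      rw [ih (by omega), mul_zero, eq_comm, mul_eq_zero] at step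
      exact step.resolve_left (by positivity)
  ext w
  have total := letterCount_add w
  by_cases hw : weight w = 0
  · rw [ofProfile, if_pos hw, Pi.zero_apply]
    rw [weight_eq_letterCount_sub] at hw
    exact profile_eq_zero _ (by omega)
  · rw [ofProfile, if_neg hw, Pi.zero_apply]

lemma profile_zero_eq_zero_of_odd (hn : Odd n) {φ : ℕ → ℚ} (hφ : ofProfile n φ ∈ invariants n) :
    φ 0 = 0 := by
  rw [ofProfile_mem_invariants_iff] at hφ
  obtain ⟨m, rfl⟩ := hn
  have profile_eq_zero : ∀ b, b ≤ m → φ (m - b) = 0 := fun b => by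
    induction b with
    | zero =>
      intro _
      have top := hφ m 0 rfl
      rw [Nat.cast_zero, mul_zero, zero_mul, mul_eq_zero] at top
      exact top.resolve_left (by positivity)
    | succ b ih =>
      intro hb
      have step := hφ (m - (b + 1)) (2 * (b + 1)) (by omega)
      rw [show m - (b + 1) + 1 = m - b by omega, ih (by omega), mul_zero, mul_eq_zero] at step
      exact step.resolve_left (by positivity)
  simpa using profile_eq_zero m le_rfl

lemma weight_ones : weight (fun _ : Fin n => 1) = 0 := by
  simp [weight, letterWeight]

lemma letterCount_zero_ones : letterCount 0 (fun _ : Fin n => 1) = 0 := by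
  simp [letterCount]

lemma ofProfile_ones (φ : ℕ → ℚ) : ofProfile n φ (fun _ => 1) = φ 0 := by
  rw [ofProfile, if_pos weight_ones, letterCount_zero_ones]

lemma eq_zero_of_isSymmetric_of_ones {f : WordFun n} (hf : f ∈ invariants n)
    (hsymm : IsSymmetric f) (hones : f (fun _ => 1) = 0) : f = 0 := by
  obtain ⟨φ, rfl⟩ := exists_ofProfile_eq (mem_invariants_iff.1 hf).1 hsymm
  exact ofProfile_eq_zero hf (by rwa [ofProfile_ones] at hones)

lemma eq_zero_of_isSymmetric_of_odd (hn : Odd n) {f : WordFun n} (hf : f ∈ invariants n)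
    (hsymm : IsSymmetric f) : f = 0 := by
  obtain ⟨φ, rfl⟩ := exists_ofProfile_eq (mem_invariants_iff.1 hf).1 hsymm
  exact ofProfile_eq_zero hf (profile_zero_eq_zero_of_odd hn hf)

lemma ones_eq_of_isSymmetric {f : WordFun (n + 2)} (hf : f ∈ invariants (n + 2))
    (hsymm : IsSymmetric f) :
    f (fun _ => 1) = 2 * (n + 1) * f (Fin.cons 0 (Fin.cons 2 fun _ => 1)) := by
  obtain ⟨φ, rfl⟩ := exists_ofProfile_eq (mem_invariants_iff.1 hf).1 hsymm
  have weight_eq : weight (Fin.cons 0 (Fin.cons 2 fun _ : Fin n => 1)) = 0 := by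
    simp [weight_cons, weight_ones, letterWeight]
  have count_eq : letterCount 0 (Fin.cons 0 (Fin.cons 2 fun _ : Fin n => 1)) = 1 := by
    simp [letterCount_cons, letterCount_zero_ones]
  have relation := (ofProfile_mem_invariants_iff φ).1 hf 0 (n + 1) (by ring)
  rw [ofProfile_ones, ofProfile, if_pos weight_eq, count_eq]
  simpa using relation

lemma exists_isSymmetric_invariant (hn : Even n) :
    ∃ f ∈ invariants n, IsSymmetric f ∧ f (fun _ => 1) ≠ 0 := by
  obtain ⟨m, rfl⟩ := hn
  let φ (a : ℕ) : ℚ := a.factorial * (2 * (m - a)).factorial / (m - a).factorial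
  refine ⟨ofProfile _ φ, (ofProfile_mem_invariants_iff φ).2 fun a b hab => ?_,
    isSymmetric_ofProfile φ, ?_⟩
  · obtain ⟨d, rfl⟩ : ∃ d, m = a + d + 1 := ⟨m - a - 1, by omega⟩
    obtain rfl : b = 2 * d + 1 := by omega
    simp only [φ, show a + d + 1 - a = d + 1 by omega, show a + d + 1 - (a + 1) = d by omega,
      mul_add, Nat.factorial_succ, mul_one]
    push_cast
    field_simp
    ring
  · rw [ofProfile_ones]
    simp only [φ]
    positivity

end SymmetricInvariants

section TreeComplement

lemma isSymmetric_of_relabel_swap {ι α R : Type*} [Finite ι] [DecidableEq ι] [CommRing R]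
    {f : (ι → α) → R} {i j : ι} (hij : i ≠ j)
    (hf : ∀ π, relabel (Equiv.swap i j) (relabel π f) = relabel π f) : IsSymmetric f := fun σ => by
  induction σ using Equiv.Perm.swap_induction_on with
  | one => rfl
  | swap_mul σ k l hkl ih =>
    obtain ⟨π, hπ⟩ := isConj_iff.1 (Equiv.Perm.isConj_swap hij hkl)
    ext w
    have conj_eq : w ∘ ⇑(Equiv.swap k l * σ) = (w ∘ π ∘ Equiv.swap i j) ∘ ⇑(π⁻¹ * σ) := by
      rw [← hπ]
      ext
      simp
    calc
      f (w ∘ ⇑(Equiv.swap k l * σ)) = relabel (Equiv.swap i j) (relabel (π⁻¹ * σ) f) (w ∘ π) := by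
        rw [conj_eq]
        rfl
      _ = relabel σ f w := by
        rw [hf, relabel_apply, relabel_apply]
        congr 1
        ext
        simp
      _ = f w := congrFun ih w

variable {n : ℕ}

lemma cons_cons_comp_swap {α : Type*} (a b : α) (r : Fin n → α) :
    (Fin.cons a (Fin.cons b r : Fin (n + 1) → α) : Fin (n + 2) → α) ∘ Equiv.swap 0 1 =
      Fin.cons b (Fin.cons a r : Fin (n + 1) → α) := by
  ext i
  refine Fin.cases ?_ (Fin.cases ?_ fun j => ?_) i
  · simp
  · simp
  · have ne_one : j.succ.succ ≠ 1 := fun h => Fin.succ_ne_zero j (Fin.succ_injective _ h)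
    simp [Equiv.swap_apply_of_ne_of_ne (Fin.succ_ne_zero _) ne_one]

lemma apply_cons_cons_comm {α R : Type*} [CommRing R] {f : (Fin (n + 2) → α) → R}
    (hf : IsSymmetric f) (a b : α) (r : Fin n → α) :
    f (Fin.cons a (Fin.cons b r)) = f (Fin.cons b (Fin.cons a r)) := by
  rw [← cons_cons_comp_swap b a]
  exact congrFun (hf (Equiv.swap 0 1)) _

lemma cons_comp_swap_succ {α : Type*} (a : α) (r : Fin n → α) (i j : Fin n) :
    (Fin.cons a r : Fin (n + 1) → α) ∘ Equiv.swap i.succ j.succ =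
      Fin.cons a (r ∘ Equiv.swap i j) := by
  ext k
  refine Fin.cases ?_ (fun k => ?_) k
  · simp [Equiv.swap_apply_of_ne_of_ne (Fin.succ_ne_zero i).symm (Fin.succ_ne_zero j).symm]
  · simp [(Fin.succ_injective n).swap_apply]

lemma relabel_swap_eq_self_of_contract_eq_zero {g : WordFun (n + 2)} (hg : contract g = 0) :
    relabel (Equiv.swap 0 1) g = g := by
  ext w
  induction w using Fin.consCases with
  | _ a w =>
  induction w using Fin.consCases with
  | _ b r =>
  have antisymm_eq := sub_swap_eq_sum_contract g b a r
  simp only [hg, Pi.zero_apply, mul_zero, Finset.sum_const_zero, sub_eq_zero] at antisymm_eq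
  rw [relabel_apply, cons_cons_comp_swap, antisymm_eq]

lemma cons_ones : (Fin.cons 1 fun _ => 1 : Fin (n + 1) → Fin 3) = fun _ => 1 :=
  Fin.cons_self_tail fun _ => 1

lemma eq_zero_of_mem_treeComplement_two {g : WordFun 2} (hg : g ∈ treeComplement 2)
    (hsymm : IsSymmetric g) : g = 0 := by
  rw [mem_treeComplement] at hg
  let value (a b : Fin 3) : ℚ := g (Fin.cons a (Fin.cons b fun _ => 1))
  have ones_eq : g (fun _ => 1) = value 1 1 := by
    simp only [value, cons_ones]
  have invariance : value 1 1 = 2 * value 0 2 := by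
    rw [← ones_eq, ones_eq_of_isSymmetric hg.1 hsymm]
    norm_num [value]
  have symmetry : value 2 0 = value 0 2 := apply_cons_cons_comm hsymm ..
  have tree_eq (a b : Fin 3) (r : Fin 0 → Fin 3) : sl2Tree [0, 1] (Fin.cons a (Fin.cons b r)) =
      !![(0 : ℚ), 0, 1; 0, 2, 0; 1, 0, 0] a b := by
    rw [← toMatrix_sl2Form, LinearMap.BilinForm.toMatrix_apply]
    rfl
  have orthogonality : value 0 2 + value 1 1 / 2 + value 2 0 = 0 := by
    rw [← hg.2 [0, 1] (by decide), wordForm_apply]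
    simp only [sum_words_succ, tree_eq, Fintype.sum_subsingleton _ fun _ : Fin 0 => (1 : Fin 3),
      Fin.sum_univ_three, Fin.prod_univ_two]
    simp [letterNorm, value]
    ring
  refine eq_zero_of_isSymmetric_of_ones hg.1 hsymm ?_
  linarith

/-- The relations between the values `x a b c = h (a, b, c, 1, …, 1)` expressing that the
contraction of an invariant `h` is symmetric. -/
def HexagonRelation (b : ℚ) (x : Fin 3 → Fin 3 → Fin 3 → ℚ) : Prop :=
  x 0 2 1 - x 2 0 1 = b * (x 1 0 2 - x 0 1 2) ∧ x 0 2 1 - x 2 0 1 = b * (x 2 1 0 - x 1 2 0)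

lemma hexagonRelation_of_isSymmetric_contract {h : WordFun (n + 3)}
    (hinv : contract h ∈ invariants (n + 2)) (hsymm : IsSymmetric (contract h)) :
    HexagonRelation (n + 1) fun a b c => h (Fin.cons a (Fin.cons b (Fin.cons c fun _ => 1))) := by
  have ones_eq := ones_eq_of_isSymmetric hinv hsymm
  have swap_eq := apply_cons_cons_comm hsymm 2 0 fun _ => 1
  rw [← cons_ones] at ones_eq
  simp only [contract, Fin.cons_zero, Fin.tail_cons, Matrix.cons_val] at ones_eq swap_eq
  rw [HexagonRelation, cons_ones]
  constructor
  · linear_combination ones_eq / 2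
  · linear_combination ones_eq / 2 - (n + 1) * swap_eq

lemma eq_of_hexagonRelation {b : ℚ} (hb : 1 < b) {x : Fin 3 → Fin 3 → Fin 3 → ℚ}
    (h₀₁₂ : HexagonRelation b x) (h₀₂₁ : HexagonRelation b fun i j k => x i k j)
    (h₁₂₀ : HexagonRelation b fun i j k => x k i j) : x 0 2 1 = x 2 0 1 := by
  obtain ⟨hp, hp'⟩ := h₀₁₂
  obtain ⟨-, hq⟩ := h₀₂₁
  obtain ⟨hr, hr'⟩ := h₁₂₀
  set p := x 0 2 1 - x 2 0 1
  set q := x 0 1 2 - x 2 1 0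
  set r := x 1 0 2 - x 1 2 0
  have p_relation : b * p = r - p - q := by linear_combination hp + hq - hr'
  have q_relation : b * q = -(p + q + r) := by linear_combination hp + hq + hr
  have r_relation : b * r = p - r - q := by linear_combination hq + hr - hp'
  have q_eq_zero : q = 0 := by
    have : (b + 2) * (b - 1) * q = 0 := by
      linear_combination b * q_relation - p_relation - r_relation
    simpa [show b + 2 ≠ 0 by linarith, show b - 1 ≠ 0 by linarith] using this
  have p_eq_zero : p = 0 := by
    have : (b + 2) * p = 0 := by
      linear_combination p_relation + q_relation - (b + 2) * q_eq_zero
    simpa [show b + 2 ≠ 0 by linarith] using this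
  exact sub_eq_zero.1 p_eq_zero

lemma contract_eq_zero_of_isSymmetric {h : WordFun (n + 4)}
    (hinv : ∀ π, contract (relabel π h) ∈ invariants (n + 3))
    (hsymm : ∀ π, IsSymmetric (contract (relabel π h))) : contract h = 0 := by
  have relation (π : Equiv.Perm (Fin (n + 4))) :=
    hexagonRelation_of_isSymmetric_contract (hinv π) (hsymm π)
  have comp_swap (a b c : Fin 3) :
      (Fin.cons a (Fin.cons b (Fin.cons c fun _ => 1)) : Fin (n + 4) → Fin 3) ∘ Equiv.swap 1 2 =
        Fin.cons a (Fin.cons c (Fin.cons b fun _ => 1)) := by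
    rw [← cons_cons_comp_swap b c]
    exact cons_comp_swap_succ a _ 0 1
  have relation_one : HexagonRelation ((n + 1 : ℕ) + 1) fun a b c =>
    h (Fin.cons a (Fin.cons b (Fin.cons c fun _ => 1))) := relation 1
  have relation_swap := relation (Equiv.swap 1 2)
  have relation_rotate := relation (Equiv.swap 1 2 * Equiv.swap 0 1)
  simp only [relabel_apply, Equiv.Perm.coe_mul, ← Function.comp_assoc, comp_swap,
    cons_cons_comp_swap] at relation_swap relation_rotate
  have one_lt : (1 : ℚ) < (n + 1 : ℕ) + 1 := by
    push_cast
    linarith [n.cast_nonneg (α := ℚ)]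
  have swap_eq := eq_of_hexagonRelation one_lt relation_one relation_swap relation_rotate
  refine eq_zero_of_isSymmetric_of_ones (hinv 1) (hsymm 1) ?_
  simp only [cons_ones] at swap_eq
  rw [← cons_ones]
  simpa [contract, sub_eq_zero] using swap_eq

lemma contract_eq_zero_of_mem_treeComplement {h : WordFun (n + 2)}
    (ih : ∀ g ∈ treeComplement (n + 1), IsSymmetric g) (hh : h ∈ treeComplement (n + 2)) :
    contract h = 0 := by
  have contract_mem (π : Equiv.Perm (Fin (n + 2))) :=
    contract_mem_treeComplement (relabel_mem_treeComplement hh π)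
  have hsymm (π : Equiv.Perm (Fin (n + 2))) := ih _ (contract_mem π)
  rcases Nat.even_or_odd (n + 1) with heven | hodd
  · obtain _ | _ | n := n
    · simp at heven
    · exact eq_zero_of_mem_treeComplement_two (contract_mem 1) (hsymm 1)
    · exact contract_eq_zero_of_isSymmetric (fun π => (contract_mem π).1) hsymm
  · exact eq_zero_of_isSymmetric_of_odd hodd (contract_mem 1).1 (hsymm 1)

lemma isSymmetric_of_mem_treeComplement {g : WordFun (n + 1)} (hg : g ∈ treeComplement (n + 1)) :
    IsSymmetric g := by
  induction n with
  | zero =>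
    intro π
    have : Subsingleton (Fin (0 + 1)) := Fin.subsingleton_one
    rw [Subsingleton.elim π 1]
    rfl
  | succ n ih =>
    exact isSymmetric_of_relabel_swap Fin.zero_ne_one fun π =>
      relabel_swap_eq_self_of_contract_eq_zero <|
        contract_eq_zero_of_mem_treeComplement (fun _ => ih) (relabel_mem_treeComplement hg π)

lemma sl2Tree_swap (i j k : Fin n) (l : List (Fin n)) :
    sl2Tree (j :: i :: k :: l) = -sl2Tree (i :: j :: k :: l) := by
  ext w
  simp only [sl2Tree, treeFun, treeVal, List.map_cons, Pi.neg_apply,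
    treeForm_cons _ (List.cons_ne_nil _ _)]
  rw [← lie_skew, map_neg]

lemma mem_treeComplement_of_isSymmetric (hn : 3 ≤ n) {g : WordFun n} (hg : g ∈ invariants n)
    (hsymm : IsSymmetric g) : g ∈ treeComplement n := by
  refine mem_treeComplement.2 ⟨hg, fun l hl => ?_⟩
  have hlen : 3 ≤ l.length := by rwa [hl.length_eq, List.length_finRange]
  have hnodup : l.Nodup := hl.nodup_iff.2 (List.nodup_finRange n)
  obtain ⟨i, j, k, l, rfl⟩ : ∃ i j k l', l = i :: j :: k :: l' := by
    rcases l with _ | ⟨i, _ | ⟨j, _ | ⟨k, l⟩⟩⟩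
    · simp at hlen
    · simp at hlen
    · simp at hlen
    · exact ⟨i, j, k, l, rfl⟩
  have map_swap : (i :: j :: k :: l).map (Equiv.swap i j) = j :: i :: k :: l := by
    simp only [List.nodup_cons, List.mem_cons, not_or] at hnodup
    have swap_eq_self : ∀ m ∈ k :: l, Equiv.swap i j m = m := fun m hm =>
      Equiv.swap_apply_of_ne_of_ne (by rintro rfl; simp_all) (by rintro rfl; simp_all)
    rw [List.map_cons, List.map_cons, List.map_congr_left swap_eq_self]
    simp
  have swap_invariance := wordForm_relabel letterNorm (Equiv.swap i j) g
    (sl2Tree (i :: j :: k :: l))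
  rw [hsymm, sl2Tree, relabel_treeFun, map_swap, ← sl2Tree, ← sl2Tree, sl2Tree_swap, map_neg]
    at swap_invariance
  linarith

lemma finrank_treeComplement_of_even (hn : 3 ≤ n) (heven : Even n) :
    Module.finrank ℚ (treeComplement n) = 1 := by
  obtain ⟨f, hf, hf_symm, hf_ones⟩ := exists_isSymmetric_invariant heven
  obtain ⟨n, rfl⟩ : ∃ m, n = m + 1 := ⟨n - 1, by omega⟩
  have hf_ne : f ≠ 0 := fun h => hf_ones (congrFun h _)
  suffices treeComplement (n + 1) = ℚ ∙ f by rw [this, finrank_span_singleton hf_ne]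
  refine le_antisymm (fun g hg => Submodule.mem_span_singleton.2
    ⟨g (fun _ => 1) / f (fun _ => 1), ?_⟩) ((Submodule.span_singleton_le_iff_mem _ _).2
      (mem_treeComplement_of_isSymmetric hn hf hf_symm))
  have hg_symm := isSymmetric_of_mem_treeComplement hg
  refine sub_eq_zero.1 (eq_zero_of_isSymmetric_of_ones
    (sub_mem (Submodule.smul_mem _ _ hf) hg.1) (fun π => ?_) ?_)
  · rw [map_sub, map_smul, hf_symm, hg_symm]
  · simp [hf_ones]

lemma treeComplement_of_odd (hodd : Odd n) : treeComplement n = ⊥ := by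
  obtain ⟨m, rfl⟩ := hodd
  exact (Submodule.eq_bot_iff _).2 fun g hg => eq_zero_of_isSymmetric_of_odd ⟨m, rfl⟩ hg.1
    (isSymmetric_of_mem_treeComplement hg)

lemma finrank_treeSpan (hn : 3 ≤ n) :
    Module.finrank ℚ (treeSpan n) + (if Even n then 1 else 0) =
      Module.finrank ℚ (invariants n) := by
  rw [← finrank_add_finrank_inf_orthogonal (wordForm_isSymm letterNorm).isRefl
    (fun _ => eq_zero_of_wordForm_self) treeSpan_le_invariants, ← treeComplement]
  split_ifs with heven
  · rw [finrank_treeComplement_of_even hn heven]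
  · rw [treeComplement_of_odd (Nat.not_even_iff_odd.1 heven), finrank_bot]

end TreeComplement

section TensorPower

lemma treeVal_eq_lBrk (κ : LinearMap.BilinForm ℚ sl2) (l : List sl2) :
    treeVal κ l = κ (lBrk l.dropLast) (l.getLastD 0) := by
  suffices ∀ (l : List sl2) (a : sl2),
      treeForm κ l a = κ (lBrk (a :: l).dropLast) ((a :: l).getLastD 0) by
    cases l with
    | nil => simp [treeVal, lBrk]
    | cons a l => exact this l a
  intro l
  induction l with
  | nil => simp [treeForm, lBrk]
  | cons y l ih =>
    intro a
    cases l with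
    | nil => rfl
    | cons z l =>
      rw [treeForm_cons κ (List.cons_ne_nil z l), ih]
      rfl

variable {n : ℕ}

lemma setOf_perm_finRange :
    {l : List (Fin n) | l.Perm (List.finRange n)} =
      Set.range fun σ : Equiv.Perm (Fin n) => List.ofFn σ := by
  refine Set.Subset.antisymm (fun l hl => ?_) (Set.range_subset_iff.2 fun σ => ?_)
  · have hlen : n = l.length := by rw [hl.length_eq, List.length_finRange]
    let σ := (finCongr hlen).trans <|
      (hl.nodup_iff.2 (List.nodup_finRange n)).getEquivOfForallMemList l fun i =>
        hl.mem_iff.2 (List.mem_finRange i)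
    exact ⟨σ, List.ext_getElem (by simp [hlen]) fun i _ _ => by simp [σ]⟩
  · rw [List.ofFn_eq_map]
    exact Equiv.Perm.map_finRange_perm σ

/-- The tensors of degree `n` as functions on words, through the pairing with pure tensors of basis
vectors. -/
def toWordFun (n : ℕ) : TP n →ₗ[ℚ] WordFun n :=
  LinearMap.pi fun w => pairT sl2Form n (sl2Basis ∘ w)

lemma toWordFun_injective : Function.Injective (toWordFun n) := by
  let dual := Basis.piTensorProduct fun _ : Fin n =>
    sl2Form.dualBasis sl2Form_nondegenerate sl2Basis
  have coord_eq (w : Fin n → Fin 3) : dual.coord w = pairT sl2Form n (sl2Basis ∘ w) := by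
    refine PiTensorProduct.ext (MultilinearMap.ext fun x => ?_)
    simp [dual, Basis.piTensorProduct_repr_tprod_apply, pairT, PiTensorProduct.lift.tprod]
  intro s t hst
  refine dual.ext_elem fun w => ?_
  rw [← Module.Basis.coord_apply, ← Module.Basis.coord_apply, coord_eq]
  exact congrFun hst w

lemma map_toWordFun_span {t : Equiv.Perm (Fin n) → TP n}
    (ht : ∀ σ (x : Fin n → sl2), pairT sl2Form n x (t σ) = brkVal sl2Form (x ∘ σ)) :
    (Submodule.span ℚ (Set.range t)).map (toWordFun n) = treeSpan n := by
  rw [Submodule.map_span, ← Set.range_comp, treeSpan, setOf_perm_finRange, ← Set.range_comp]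
  congr 2
  ext σ w
  calc
    pairT sl2Form n (sl2Basis ∘ w) (t σ) = treeVal sl2Form (List.ofFn ((sl2Basis ∘ w) ∘ σ)) := by
      rw [ht, treeVal_eq_lBrk, brkVal]
    _ = sl2Tree (List.ofFn σ) w := by rw [sl2Tree, treeFun, List.map_ofFn]

end TensorPower

end LinearTree

theorem finrank_span_linear_tree_tensors
    (κ : sl2 →ₗ[ℚ] sl2 →ₗ[ℚ] ℚ)
    (hHH : κ H H = 2) (hEF : κ E F = 1) (hFE : κ F E = 1)
    (hHE : κ H E = 0) (hEH : κ E H = 0) (hHF : κ H F = 0) (hFH : κ F H = 0)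
    (hEE : κ E E = 0) (hFF : κ F F = 0)
    (R : ℕ → ℕ) (hR2 : R 2 = 1) (hR3 : R 3 = 1)
    (hRrec : ∀ n, 4 ≤ n → (n + 1) * R n = (n - 1) * (2 * R (n - 1) + 3 * R (n - 2))) :
    ∀ n, 3 ≤ n →
    ∀ t : Equiv.Perm (Fin n) → TP n,
      (∀ σ (x : Fin n → sl2), pairT κ n x (t σ) = brkVal κ (x ∘ σ)) →
      Module.finrank ℚ (Submodule.span ℚ (Set.range t))
        = (if Even n then R n - 1 else R n) := by
  intro n hn t ht
  obtain rfl := LinearTree.eq_sl2Form hHH hEF hFE hHE hEH hHF hFH hEE hFF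
  have span_eq : Module.finrank ℚ (Submodule.span ℚ (Set.range t)) =
      Module.finrank ℚ (LinearTree.treeSpan n) := by
    rw [← LinearTree.map_toWordFun_span ht]
    exact (Submodule.equivMapOfInjective _ LinearTree.toWordFun_injective _).finrank_eq
  have treeSpan_eq := LinearTree.finrank_treeSpan hn
  have invariants_eq := LinearTree.finrank_invariants n
  obtain ⟨m, rfl⟩ : ∃ m, n = m + 2 := ⟨n - 2, by omega⟩
  have riordan_eq := LinearTree.riordan_add_trinomial R hR2 hR3 hRrec m
  split_ifs at treeSpan_eq ⊢ <;> omega
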